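/- arXiv:2507.11126 — 2 statements merged into one kernel-verified Lean document; each statement's English description precedes it below -/
import Mathlib

section
/- Let T be a minimal trap set of an automaton A and let ρ be a run of A with ρ_i ∈ T for some index i. If S is a set of states such that S ∩ T ≠ ∅ and T \ S is a transient of A, then ρ models Inf(S), i.e., ρ visits S infinitely often. -/
/-- One-step transition relation: `q → q'` iff `(q, a, q') ∈ δ` for some letter `a`. -/
def Step {Q A : Type*} (δ : Set (Q × A × Q)) (q q' : Q) : Prop :=
  ∃ a, (q, a, q') ∈ δ

/-- A run of the automaton: an infinite sequence of states starting in an initial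
state and following the transition relation. -/
def IsRun {Q A : Type*} (δ : Set (Q × A × Q)) (Q₀ : Set Q) (ρ : ℕ → Q) : Prop :=
  ρ 0 ∈ Q₀ ∧ ∀ i, Step δ (ρ i) (ρ (i + 1))

/-- A trap set: a nonempty set of states closed under the transition relation. -/
def IsTrap {Q A : Type*} (δ : Set (Q × A × Q)) (T : Set Q) : Prop :=
  T.Nonempty ∧ ∀ q ∈ T, ∀ q', Step δ q q' → q' ∈ T

/-- Reachability: reflexive-transitive closure of the transition relation. -/
def Reach {Q A : Type*} (δ : Set (Q × A × Q)) : Q → Q → Prop :=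
  Relation.ReflTransGen (Step δ)

/-- A strongly connected component: a maximal set of pairwise-reachable states. -/
def IsSCC {Q A : Type*} (δ : Set (Q × A × Q)) (K : Set Q) : Prop :=
  (∀ p ∈ K, ∀ q ∈ K, Reach δ p q) ∧
  ∀ K', K ⊆ K' → (∀ p ∈ K', ∀ q ∈ K', Reach δ p q) → K' = K

/-- A bottom SCC: an SCC closed under the transition relation. -/
def IsBSCC {Q A : Type*} (δ : Set (Q × A × Q)) (K : Set Q) : Prop :=
  IsSCC δ K ∧ ∀ q ∈ K, ∀ q', Step δ q q' → q' ∈ K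

/-- A minimal trap set: a trap set with no proper subset that is a trap set. -/
def IsMinTrap {Q A : Type*} (δ : Set (Q × A × Q)) (T : Set Q) : Prop :=
  IsTrap δ T ∧ ∀ T', T' ⊂ T → ¬ IsTrap δ T'

/-- A transient: a set of states that every run of the automaton leaves
infinitely often (i.e., every run visits its complement infinitely often). -/
def IsTransient {Q A : Type*} (δ : Set (Q × A × Q)) (Q₀ : Set Q) (C : Set Q) : Prop :=
  ∀ ρ, IsRun δ Q₀ ρ → {i | ρ i ∉ C}.Infinite

section

open Filter

variable {Q A : Type*} {δ : Set (Q × A × Q)} {Q₀ T : Set Q} {ρ : ℕ → Q} {i j : ℕ}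

theorem IsTrap.mem_of_le (hT : IsTrap δ T) (hstep : ∀ k, Step δ (ρ k) (ρ (k + 1)))
    (hi : ρ i ∈ T) (hij : i ≤ j) : ρ j ∈ T :=
  Nat.le_induction hi (fun k _ hk ↦ hT.2 (ρ k) hk (ρ (k + 1)) (hstep k)) j hij

theorem run_in_min_trap_models_inf_general (hT : IsTrap δ T) (hρ : IsRun δ Q₀ ρ) (hi : ρ i ∈ T)
    {S : Set Q} (htr : IsTransient δ Q₀ (T \ S)) : {j | ρ j ∈ S}.Infinite := by
  have eventually_mem : ∀ᶠ j in atTop, ρ j ∈ T :=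
    eventually_atTop.mpr ⟨i, fun _ ↦ hT.mem_of_le hρ.2 hi⟩
  have frequently_notMem : ∃ᶠ j in atTop, ρ j ∉ T \ S :=
    Nat.frequently_atTop_iff_infinite.mpr (htr ρ hρ)
  refine Nat.frequently_atTop_iff_infinite.mp ?_
  refine (frequently_notMem.and_eventually eventually_mem).mono fun j ⟨hj, hjT⟩ ↦ ?_
  by_contra hjS
  exact hj ⟨hjT, hjS⟩

end

/-- If a run enters a minimal trap set `T`, and `S` intersects `T`
with `T \ S` a transient, then the run models `Inf(S)`. -/
theorem run_in_min_trap_models_inf {Q A : Type*} [Fintype Q] [Fintype A]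
    (δ : Set (Q × A × Q)) (Q₀ : Set Q) (hQ₀ : Q₀.Nonempty)
    (T : Set Q) (hT : IsMinTrap δ T)
    (ρ : ℕ → Q) (hρ : IsRun δ Q₀ ρ)
    (i : ℕ) (hi : ρ i ∈ T)
    (S : Set Q) (hST : (S ∩ T).Nonempty) (htr : IsTransient δ Q₀ (T \ S)) :
    {j | ρ j ∈ S}.Infinite :=
  run_in_min_trap_models_inf_general hT.1 hρ hi htr
end

section
/- Let A be a deterministic complete automaton, and let T, S be sets of states of A such that T is a minimal trap set, S ∩ T ≠ ∅, and T \ S is nonempty and not a transient of A. Then for every run ρ of A and every index i with ρ_i ∈ T, the finite word read along ρ up to position i is an ugly prefix for the acceptance condition Fin(S). -/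
/-- A run of the automaton on the infinite word `w`. -/
def IsRunOn {Q A : Type*} (δ : Set (Q × A × Q)) (Q₀ : Set Q)
    (w : ℕ → A) (ρ : ℕ → Q) : Prop :=
  ρ 0 ∈ Q₀ ∧ ∀ i, (ρ i, w i, ρ (i + 1)) ∈ δ

/-- Concatenation of a finite word `u` with an infinite word `w`. -/
def wcat {A : Type*} (u : List A) (w : ℕ → A) : ℕ → A :=
  fun n => if h : n < u.length then u.get ⟨n, h⟩ else w (n - u.length)

/-- `u` is a good prefix for the acceptance condition `φ` (w.r.t. the function
`run` assigning to each infinite word its unique run): every infinite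
continuation of `u` yields a word whose run models `φ`. -/
def GoodPrefix {Q A : Type*} (run : (ℕ → A) → ℕ → Q)
    (φ : (ℕ → Q) → Prop) (u : List A) : Prop :=
  ∀ w : ℕ → A, φ (run (wcat u w))

/-- `u` is a bad prefix for `φ`: no infinite continuation of `u` yields a word
whose run models `φ`. -/
def BadPrefix {Q A : Type*} (run : (ℕ → A) → ℕ → Q)
    (φ : (ℕ → Q) → Prop) (u : List A) : Prop :=
  ∀ w : ℕ → A, ¬ φ (run (wcat u w))

/-- `u` is an ugly prefix for `φ`: no finite extension of `u` is good or bad. -/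
def UglyPrefix {Q A : Type*} (run : (ℕ → A) → ℕ → Q)
    (φ : (ℕ → Q) → Prop) (u : List A) : Prop :=
  ∀ v : List A, ¬ GoodPrefix run φ (u ++ v) ∧ ¬ BadPrefix run φ (u ++ v)

/-!
Determinism makes the state reached by a finite word independent of its continuation, and every run
from that state is read along some continuation. Hence a prefix leading into a trap set is ugly for
a tail-invariant condition as soon as each state of the trap starts both a run satisfying the
condition and a run violating it. A minimal trap set `T` is strongly connected, so from any of its
states one can reach a run staying in `T \ S` forever, and one can return to `S` over and over
again by always stepping closer to `S`.
-/

/-- Determinism of an automaton; completeness and the existence of an initial state are not part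
of the notion. -/
structure IsDeterministic {Q A : Type*} (δ : Set (Q × A × Q)) (Q₀ : Set Q) : Prop where
  initial_subsingleton : Q₀.Subsingleton
  target_unique : ∀ q a q₁ q₂, (q, a, q₁) ∈ δ → (q, a, q₂) ∈ δ → q₁ = q₂

/-- The least number of steps in which a run started at `q` can visit `S`. Runs started at a state
`q` are encoded as runs of the automaton with initial set `{q}`. The value is `0` if no run from
`q` visits `S`. -/
noncomputable def runDist {Q A : Type*} (δ : Set (Q × A × Q)) (S : Set Q) (q : Q) : ℕ :=
  sInf {k | ∃ σ, IsRun δ {q} σ ∧ σ k ∈ S}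

section Sequences

variable {Q A : Type*}

theorem finite_setOf_add_mem_iff {S : Set Q} {σ : ℕ → Q} (k : ℕ) :
    {n | σ (k + n) ∈ S}.Finite ↔ {n | σ n ∈ S}.Finite := by
  refine ⟨fun h ↦ ((Set.finite_lt_nat k).union (h.image (k + ·))).subset fun n hn ↦ ?_,
    fun h ↦ h.preimage (f := (k + ·)) (add_right_injective k).injOn⟩
  rcases lt_or_ge n k with hnk | hkn
  · exact Or.inl hnk
  · obtain ⟨m, rfl⟩ := Nat.exists_eq_add_of_le hkn
    exact Or.inr ⟨m, hn, rfl⟩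

theorem wcat_of_lt {u : List A} {n : ℕ} (h : n < u.length) (w : ℕ → A) : wcat u w n = u[n] :=
  dif_pos h

theorem wcat_length_add (u : List A) (w : ℕ → A) (n : ℕ) : wcat u w (u.length + n) = w n := by
  simp [wcat]

theorem wcat_ofFn_append_of_lt {i k : ℕ} (hk : k < i) (w w' : ℕ → A) (v : List A) :
    wcat ((List.ofFn fun j : Fin i ↦ w j) ++ v) w' k = w k := by
  have hlen : k < (List.ofFn fun j : Fin i ↦ w j).length := by rwa [List.length_ofFn]
  rw [wcat_of_lt (List.length_append ▸ Nat.lt_add_right _ hlen), List.getElem_append_left hlen,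
    List.getElem_ofFn]

end Sequences

section Runs

variable {Q A : Type*} {δ : Set (Q × A × Q)} {Q₀ S T : Set Q} {p q : Q} {ρ σ : ℕ → Q}

theorem IsRunOn.isRun {w : ℕ → A} (hρ : IsRunOn δ Q₀ w ρ) : IsRun δ Q₀ ρ :=
  ⟨hρ.1, fun n ↦ ⟨w n, hρ.2 n⟩⟩

theorem IsRun.apply_zero (hσ : IsRun δ {p} σ) : σ 0 = p :=
  hσ.1

theorem IsRun.shift (hρ : IsRun δ Q₀ ρ) (k : ℕ) : IsRun δ {ρ k} fun n ↦ ρ (k + n) :=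
  ⟨rfl, fun n ↦ hρ.2 (k + n)⟩

theorem IsRun.cons (hσ : IsRun δ {q} σ) (hpq : Step δ p q) :
    IsRun δ {p} fun n ↦ Nat.casesOn n p σ := by
  refine ⟨rfl, ?_⟩
  rintro (_ | n)
  · rwa [← hσ.apply_zero] at hpq
  · exact hσ.2 n

theorem IsRun.exists_prepend (hσ : IsRun δ {q} σ) (hpq : Reach δ p q) :
    ∃ τ k, IsRun δ {p} τ ∧ ∀ n, τ (k + n) = σ n := by
  induction hpq using Relation.ReflTransGen.head_induction_on with
  | refl => exact ⟨σ, 0, hσ, fun n ↦ by rw [Nat.zero_add]⟩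
  | head hstep _ ih =>
    obtain ⟨τ, k, hτ, htail⟩ := ih
    refine ⟨_, k + 1, hτ.cons hstep, fun n ↦ ?_⟩
    rw [Nat.succ_add]
    exact htail n

theorem exists_isRun_forall_mem_of_not_isTransient (h : ¬ IsTransient δ Q₀ S) :
    ∃ q σ, IsRun δ {q} σ ∧ ∀ n, σ n ∈ S := by
  simp only [IsTransient, not_forall, Set.not_infinite] at h
  obtain ⟨ρ, hρ, hfin⟩ := h
  obtain ⟨b, hb⟩ := hfin.bddAbove
  refine ⟨_, _, hρ.shift (b + 1), fun n ↦ ?_⟩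
  by_contra hn
  have : b + 1 + n ≤ b := hb hn
  omega

theorem IsTrap.mem_of_isRun (hT : IsTrap δ T) (hρ : IsRun δ Q₀ ρ) {i j : ℕ} (hij : i ≤ j)
    (hi : ρ i ∈ T) : ρ j ∈ T :=
  Nat.le_induction hi (fun n _ hn ↦ hT.2 _ hn _ (hρ.2 n)) j hij

theorem IsTrap.mem_of_reach (hT : IsTrap δ T) (hp : p ∈ T) (hpq : Reach δ p q) : q ∈ T := by
  induction hpq with
  | refl => exact hp
  | tail _ hstep ih => exact hT.2 _ ih _ hstep

theorem isTrap_setOf_reach (δ : Set (Q × A × Q)) (p : Q) : IsTrap δ {q | Reach δ p q} :=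
  ⟨⟨p, .refl⟩, fun _ hq _ hstep ↦ .tail hq hstep⟩

theorem IsMinTrap.reach (hT : IsMinTrap δ T) (hp : p ∈ T) (hq : q ∈ T) : Reach δ p q := by
  by_contra hpq
  exact hT.2 {x | Reach δ p x} ⟨fun _ ↦ hT.1.mem_of_reach hp, fun h ↦ hpq (h hq)⟩
    (isTrap_setOf_reach δ p)

theorem exists_step_runDist_lt (hσ : IsRun δ {p} σ) (hmem : ∃ n, σ n ∈ S) (hp : p ∉ S) :
    ∃ q, Step δ p q ∧ runDist δ S q < runDist δ S p := by
  obtain ⟨n, hn⟩ := hmem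
  obtain ⟨τ, hτ, hτS⟩ : ∃ τ, IsRun δ {p} τ ∧ τ (runDist δ S p) ∈ S :=
    Nat.sInf_mem (s := {k | ∃ τ, IsRun δ {p} τ ∧ τ k ∈ S}) ⟨n, σ, hσ, hn⟩
  obtain rfl : τ 0 = p := hτ.apply_zero
  obtain ⟨m, hm⟩ : ∃ m, runDist δ S (τ 0) = 1 + m := by
    refine Nat.exists_eq_add_of_le (Nat.one_le_iff_ne_zero.2 fun h0 ↦ hp ?_)
    rwa [h0] at hτS
  rw [hm] at hτS
  have hle : runDist δ S (τ 1) ≤ m := Nat.sInf_le ⟨_, hτ.shift 1, hτS⟩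
  exact ⟨τ 1, hτ.2 0, by omega⟩

theorem infinite_setOf_mem_of_rank_lt {d : Q → ℕ}
    (hd : ∀ n, σ n ∉ S → d (σ (n + 1)) < d (σ n)) : {n | σ n ∈ S}.Infinite := by
  intro hfin
  obtain ⟨b, hb⟩ := hfin.bddAbove
  have hanti : StrictAnti fun n ↦ d (σ (b + 1 + n)) := strictAnti_nat_of_succ_lt fun n ↦
    hd _ fun hn ↦ by have : b + 1 + n ≤ b := hb hn; omega
  exact not_strictAnti_of_wellFoundedLT _ hanti

theorem IsTrap.exists_isRun_infinite (hT : IsTrap δ T)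
    (hvisit : ∀ q ∈ T, ∃ σ, IsRun δ {q} σ ∧ ∃ n, σ n ∈ S) (hp : p ∈ T) :
    ∃ σ, IsRun δ {p} σ ∧ {n | σ n ∈ S}.Infinite := by
  have hnext : ∀ q : T, ∃ q' : T,
      Step δ q q' ∧ ((q : Q) ∉ S → runDist δ S q' < runDist δ S q) := by
    rintro ⟨q, hq⟩
    obtain ⟨σ, hσ, hmem⟩ := hvisit q hq
    by_cases hqS : q ∈ S
    · have hstep : Step δ q (σ 1) := by
        rw [← hσ.apply_zero]
        exact hσ.2 0
      exact ⟨⟨σ 1, hT.2 q hq _ hstep⟩, hstep, absurd hqS⟩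
    · obtain ⟨q', hstep, hlt⟩ := exists_step_runDist_lt hσ hmem hqS
      exact ⟨⟨q', hT.2 q hq q' hstep⟩, hstep, fun _ ↦ hlt⟩
  choose next hstep hlt using hnext
  refine ⟨fun n ↦ next^[n] ⟨p, hp⟩, ⟨rfl, fun n ↦ ?_⟩,
    infinite_setOf_mem_of_rank_lt (d := runDist δ S) fun n hn ↦ ?_⟩
  · simpa only [Function.iterate_succ_apply'] using hstep _
  · simpa only [Function.iterate_succ_apply'] using hlt _ hn

end Runs

section Prefixes

variable {Q A : Type*} {δ : Set (Q × A × Q)} {Q₀ S T : Set Q} {ρ : ℕ → Q} {w : ℕ → A}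

theorem IsDeterministic.eq_of_agree (hdet : IsDeterministic δ Q₀) {w' : ℕ → A} {ρ' : ℕ → Q}
    (hρ : IsRunOn δ Q₀ w ρ) (hρ' : IsRunOn δ Q₀ w' ρ') {n : ℕ} (hw : ∀ k < n, w k = w' k) :
    ρ n = ρ' n := by
  induction n with
  | zero => exact hdet.initial_subsingleton hρ.1 hρ'.1
  | succ n ih =>
    have hstep := hρ.2 n
    rw [ih fun k hk ↦ hw k (hk.trans n.lt_succ_self), hw n n.lt_succ_self] at hstep
    exact hdet.target_unique _ _ _ _ hstep (hρ'.2 n)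

variable {run : (ℕ → A) → ℕ → Q}

theorem IsDeterministic.exists_run_wcat_eq (hdet : IsDeterministic δ Q₀)
    (hrun : ∀ w, IsRunOn δ Q₀ w (run w)) (x : List A) (w : ℕ → A) {σ : ℕ → Q}
    (hσ : IsRun δ {run (wcat x w) x.length} σ) :
    ∃ w', ∀ n, run (wcat x w') (x.length + n) = σ n := by
  choose w' hw' using hσ.2
  refine ⟨w', fun n ↦ ?_⟩
  induction n with
  | zero =>
    rw [hσ.apply_zero]
    exact hdet.eq_of_agree (hrun _) (hrun _) fun k hk ↦ by rw [wcat_of_lt hk, wcat_of_lt hk]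
  | succ n ih =>
    have hstep := (hrun (wcat x w')).2 (x.length + n)
    rw [ih, wcat_length_add] at hstep
    exact hdet.target_unique _ _ _ _ hstep (hw' n)

theorem IsTrap.uglyPrefix (hT : IsTrap δ T) (hdet : IsDeterministic δ Q₀)
    (hrun : ∀ w, IsRunOn δ Q₀ w (run w)) {φ : (ℕ → Q) → Prop}
    (hφ : ∀ σ k, φ (fun n ↦ σ (k + n)) ↔ φ σ)
    (hpos : ∀ p ∈ T, ∃ σ, IsRun δ {p} σ ∧ φ σ) (hneg : ∀ p ∈ T, ∃ σ, IsRun δ {p} σ ∧ ¬ φ σ)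
    (hρ : IsRunOn δ Q₀ w ρ) {i : ℕ} (hi : ρ i ∈ T) :
    UglyPrefix run φ (List.ofFn fun k : Fin i ↦ w k) := by
  intro v
  set x := (List.ofFn fun k : Fin i ↦ w k) ++ v with hx
  have hreached : run (wcat x w) x.length ∈ T := by
    have hagree : run (wcat x w) i = ρ i :=
      hdet.eq_of_agree (hrun _) hρ fun k hk ↦ wcat_ofFn_append_of_lt hk w w v
    exact hT.mem_of_isRun (hrun _).isRun (by simp [hx]) (hagree ▸ hi)
  have hrealize {σ : ℕ → Q} (hσ : IsRun δ {run (wcat x w) x.length} σ) :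
      ∃ w', φ (run (wcat x w')) ↔ φ σ := by
    obtain ⟨w', hw'⟩ := hdet.exists_run_wcat_eq hrun x w hσ
    exact ⟨w', by rw [← hφ _ x.length, funext hw']⟩
  constructor
  · intro hgood
    obtain ⟨σ, hσ, hσφ⟩ := hneg _ hreached
    obtain ⟨w', hw'⟩ := hrealize hσ
    exact hσφ (hw'.1 (hgood w'))
  · intro hbad
    obtain ⟨σ, hσ, hσφ⟩ := hpos _ hreached
    obtain ⟨w', hw'⟩ := hrealize hσ
    exact hbad w' (hw'.2 hσφ)

theorem ugly_prefix_for_fin_general (hdet : IsDeterministic δ Q₀)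
    (hrun : ∀ w, IsRunOn δ Q₀ w (run w)) (hT : IsMinTrap δ T) (hST : (S ∩ T).Nonempty)
    (hTStr : ¬ IsTransient δ Q₀ (T \ S)) (hρ : IsRunOn δ Q₀ w ρ) {i : ℕ} (hi : ρ i ∈ T) :
    UglyPrefix run (fun r ↦ {n | r n ∈ S}.Finite) (List.ofFn fun k : Fin i ↦ w k) := by
  obtain ⟨s, hsS, hsT⟩ := hST
  obtain ⟨q, σ, hσ, hσTS⟩ := exists_isRun_forall_mem_of_not_isTransient hTStr
  have hqT : q ∈ T := hσ.apply_zero ▸ (hσTS 0).1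
  refine hT.1.uglyPrefix hdet hrun (fun _ k ↦ finite_setOf_add_mem_iff k) (fun p hp ↦ ?_)
    (fun p hp ↦ hT.1.exists_isRun_infinite (fun p hp ↦ ?_) hp) hρ hi
  · obtain ⟨τ, k, hτ, htail⟩ := hσ.exists_prepend (hT.reach hp hqT)
    have hempty : {n | σ n ∈ S} = ∅ := Set.eq_empty_of_forall_notMem fun n ↦ (hσTS n).2
    refine ⟨τ, hτ, (finite_setOf_add_mem_iff k).1 ?_⟩
    simp only [htail, hempty, Set.finite_empty]
  · obtain ⟨τ, -, hτ, -⟩ := hσ.exists_prepend (hT.reach hsT hqT)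
    obtain ⟨υ, k, hυ, htail⟩ := hτ.exists_prepend (hT.reach hp hsT)
    refine ⟨υ, hυ, k, ?_⟩
    rwa [← Nat.add_zero k, htail, hτ.apply_zero]

end Prefixes

/-- In a deterministic complete automaton, if `T` is a minimal
trap set, `S ∩ T ≠ ∅`, and `T \ S` is nonempty and not a transient, then for
every run `ρ` (on word `w`) and index `i` with `ρ i ∈ T`, the finite word
`w₀ ⋯ w_{i-1}` read along `ρ` up to position `i` is an ugly prefix for the
acceptance condition `Fin(S)`. -/
theorem ugly_prefix_for_fin {Q A : Type*} [Fintype Q] [Fintype A]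
    (δ : Set (Q × A × Q)) (Q₀ : Set Q)
    (hdet₀ : ∃ q₀, Q₀ = {q₀})
    (hdet : ∀ q a q₁ q₂, (q, a, q₁) ∈ δ → (q, a, q₂) ∈ δ → q₁ = q₂)
    (hcomp : ∀ q a, ∃ q', (q, a, q') ∈ δ)
    (run : (ℕ → A) → ℕ → Q)
    (hrun : ∀ w, IsRunOn δ Q₀ w (run w))
    (T S : Set Q)
    (hT : IsMinTrap δ T)
    (hST : (S ∩ T).Nonempty)
    (hTSne : (T \ S).Nonempty)
    (hTStr : ¬ IsTransient δ Q₀ (T \ S))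
    (ρ : ℕ → Q) (w : ℕ → A) (hρ : IsRunOn δ Q₀ w ρ)
    (i : ℕ) (hi : ρ i ∈ T) :
    UglyPrefix run (fun r => {n | r n ∈ S}.Finite) (List.ofFn fun k : Fin i => w k) :=
  ugly_prefix_for_fin_general ⟨hdet₀.elim fun _ h ↦ h ▸ Set.subsingleton_singleton, hdet⟩
    hrun hT hST hTStr hρ hi
end
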